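/- (Separation of the two tests.) Let n ≥ 1, let Σ be a positive definite symmetric real n×n matrix, and let l_i, l_m, w ∈ ℝⁿ satisfy: (i) (l_m+w)ᵀΣ⁻¹(l_m+w) ≤ (l_i+w)ᵀΣ⁻¹(l_i+w); (ii) l_m ≠ l_i; and (iii) (l_m − l_i)ᵀΣ⁻¹w ≥ 0. Then the classical test with threshold τ'_LB = (1/8)(l_i+w)ᵀΣ⁻¹(l_i+w) accepts the attacker, (1/8)(l_m+w)ᵀΣ⁻¹(l_m+w) ≤ τ'_LB, while the environment-estimation test with threshold τ_LB = (1/8)wᵀΣ⁻¹w rejects it, (1/8)(l_m + w − l_i)ᵀΣ⁻¹(l_m + w − l_i) > τ_LB. Hence there are cyber-physical emulation attacks undetectable by classical fingerprinting that are detected by environment estimation. -/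

import Mathlib

open Matrix

section

variable {ι R : Type*} [Fintype ι]

theorem add_dotProduct_mulVec_add_of_isSymm [CommSemiring R]
    {A : Matrix ι ι R} (hA : A.IsSymm) (v w : ι → R) :
    (v + w) ⬝ᵥ (A *ᵥ (v + w)) = v ⬝ᵥ (A *ᵥ v) + 2 * (v ⬝ᵥ (A *ᵥ w)) + w ⬝ᵥ (A *ᵥ w) := by
  have cross_symm : w ⬝ᵥ (A *ᵥ v) = v ⬝ᵥ (A *ᵥ w) := by
    simpa only [hA.eq] using dotProduct_transpose_mulVec A w v
  simp only [mulVec_add, add_dotProduct, dotProduct_add, cross_symm]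
  ring

theorem dotProduct_mulVec_lt_add_of_posDef [CommRing R] [PartialOrder R] [IsOrderedAddMonoid R]
    [StarRing R] [TrivialStar R] {A : Matrix ι ι R} (hA : A.PosDef) {v w : ι → R}
    (hv : v ≠ 0) (hvw : 0 ≤ v ⬝ᵥ (A *ᵥ w)) :
    w ⬝ᵥ (A *ᵥ w) < (v + w) ⬝ᵥ (A *ᵥ (v + w)) := by
  have v_pos : 0 < v ⬝ᵥ (A *ᵥ v) := by
    simpa only [star_trivial] using hA.dotProduct_mulVec_pos hv
  have cross_nonneg : 0 ≤ 2 * (v ⬝ᵥ (A *ᵥ w)) := by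
    simpa only [two_mul] using add_nonneg hvw hvw
  rw [add_dotProduct_mulVec_add_of_isSymm (isHermitian_iff_isSymm.mp hA.isHermitian)]
  exact lt_add_of_pos_left _ (add_pos_of_pos_of_nonneg v_pos cross_nonneg)

end

/-- Separation of the two tests: under (i) `(l_m+w)ᵀΣ⁻¹(l_m+w) ≤
(l_i+w)ᵀΣ⁻¹(l_i+w)`, (ii) `l_m ≠ l_i`, and (iii) `(l_m−l_i)ᵀΣ⁻¹w ≥ 0`,
the classical test with threshold `τ'_LB = (1/8)(l_i+w)ᵀΣ⁻¹(l_i+w)` accepts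
the attacker, while the environment-estimation test with threshold
`τ_LB = (1/8)wᵀΣ⁻¹w` rejects it. -/
theorem classical_accepts_env_rejects {n : ℕ} (hn : 1 ≤ n)
    (S : Matrix (Fin n) (Fin n) ℝ) (hS : S.PosDef)
    (li lm w : Fin n → ℝ)
    (hatt : (lm + w) ⬝ᵥ (S⁻¹ *ᵥ (lm + w)) ≤ (li + w) ⬝ᵥ (S⁻¹ *ᵥ (li + w)))
    (hne : lm ≠ li)
    (hlw : 0 ≤ (lm - li) ⬝ᵥ (S⁻¹ *ᵥ w)) :
    (1/8) * ((lm + w) ⬝ᵥ (S⁻¹ *ᵥ (lm + w)))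
        ≤ (1/8) * ((li + w) ⬝ᵥ (S⁻¹ *ᵥ (li + w))) ∧
      (1/8) * ((lm + w - li) ⬝ᵥ (S⁻¹ *ᵥ (lm + w - li)))
        > (1/8) * (w ⬝ᵥ (S⁻¹ *ᵥ w)) := by
  have env_rejects := dotProduct_mulVec_lt_add_of_posDef hS.inv (sub_ne_zero.mpr hne) hlw
  rw [← add_sub_right_comm] at env_rejects
  exact ⟨by gcongr, by gcongr⟩
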